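/- For every d-regular graph G on n vertices and every λ > 0, (1/n) log P_G(λ) ≤ (1/(2d)) log P_{K_{d,d}}(λ) = (1/(2d)) log(2(1+λ)^d − 1). -/

import Mathlib

open Finset
open scoped Classical

/-- The independence polynomial of a graph: the sum of `x ^ |I|` over all
independent sets `I` (including the empty set). -/
noncomputable def indepPoly {V : Type*} [Fintype V] (G : SimpleGraph V) (x : ℝ) : ℝ :=
  ∑ s ∈ Finset.univ.powerset.filter
      (fun s : Finset V => ∀ u ∈ s, ∀ v ∈ s, ¬ G.Adj u v), x ^ s.card

/-!
Zhao's swapping trick reduces the inequality to bipartite graphs. If `A` and `B` are independent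
in `G`, then `G[A ∪ B]` is bipartite; exchanging `A` and `B` on one of its parts leaves a pair
with no edge of `G` from the first set to the second, that is, an independent set of the bipartite
double cover `G × K₂`. The parts can be chosen as a function of `A ∪ B`, which the exchange
preserves, so the map is injective and `P_G(x)² ≤ P_{G × K₂}(x)`.

In a bipartite graph, summing over the independent set on the right first turns `P` into a weighted
sum over subsets `A` of the left side of a product of functions of `A ∩ N(b)`, over right vertices
`b`. If every left vertex has degree `d`, it lies in exactly `d` of the sets `N(b)`, so Finner's
inequality with all exponents `1/d` bounds `P` by a product of factors local to the vertices `b`.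
-/

section Holder

variable {ι : Type*} {s : Finset ι} {w : ι → ℝ}

lemma prod_rpow_add_prod_rpow_le (hw : ∀ i ∈ s, 0 ≤ w i) (hw₁ : ∑ i ∈ s, w i = 1)
    {a b : ι → ℝ} (ha : ∀ i ∈ s, 0 ≤ a i) (hb : ∀ i ∈ s, 0 ≤ b i) :
    ∏ i ∈ s, a i ^ w i + ∏ i ∈ s, b i ^ w i ≤ ∏ i ∈ s, (a i + b i) ^ w i := by
  have ofReal_prod {c : ι → ℝ} (hc : ∀ i ∈ s, 0 ≤ c i) :
      ENNReal.ofReal (∏ i ∈ s, c i ^ w i) = ∏ i ∈ s, ENNReal.ofReal (c i) ^ w i := by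
    rw [ENNReal.ofReal_prod_of_nonneg fun i hi => Real.rpow_nonneg (hc i hi) _]
    exact prod_congr rfl fun i hi => (ENNReal.ofReal_rpow_of_nonneg (hc i hi) (hw i hi)).symm
  have hab : ∀ i ∈ s, 0 ≤ a i + b i := fun i hi => add_nonneg (ha i hi) (hb i hi)
  have holder := ENNReal.lintegral_prod_norm_pow_le (μ := MeasureTheory.Measure.count) s
    (f := fun i j => ENNReal.ofReal (bif j then a i else b i))
    (fun i _ => (measurable_of_countable _).aemeasurable) hw₁ hw
  simp only [MeasureTheory.lintegral_count, tsum_fintype, Fintype.sum_bool, cond_true,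
    cond_false] at holder
  rw [← ENNReal.ofReal_le_ofReal_iff (prod_nonneg fun i hi => Real.rpow_nonneg (hab i hi) _),
    ENNReal.ofReal_add (prod_nonneg fun i hi => Real.rpow_nonneg (ha i hi) _)
      (prod_nonneg fun i hi => Real.rpow_nonneg (hb i hi) _),
    ofReal_prod ha, ofReal_prod hb, ofReal_prod hab]
  refine holder.trans_eq (prod_congr rfl fun i hi => ?_)
  rw [ENNReal.ofReal_add (ha i hi) (hb i hi)]

lemma prod_rpow_add_mul_prod_rpow_le (hw : ∀ i ∈ s, 0 ≤ w i) (hw₁ : ∑ i ∈ s, w i = 1)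
    {a b : ι → ℝ} (ha : ∀ i ∈ s, 0 ≤ a i) (hb : ∀ i ∈ s, 0 ≤ b i) {y : ℝ} (hy : 0 ≤ y) :
    ∏ i ∈ s, a i ^ w i + y * ∏ i ∈ s, b i ^ w i ≤ ∏ i ∈ s, (a i + y * b i) ^ w i := by
  have hy_prod : y * ∏ i ∈ s, b i ^ w i = ∏ i ∈ s, (y * b i) ^ w i := by
    rw [prod_congr rfl fun i hi => Real.mul_rpow hy (hb i hi), prod_mul_distrib,
      ← Real.rpow_sum_of_nonneg hy hw, hw₁, Real.rpow_one]
  rw [hy_prod]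
  exact prod_rpow_add_prod_rpow_le hw hw₁ ha fun i hi => mul_nonneg hy (hb i hi)

end Holder

section Swap

variable {V : Type*}

/-- Zhao's swap: the two sets of the pair `p` exchange their elements lying in `T`. -/
noncomputable def swapOn (T : Finset V) (p : Finset V × Finset V) : Finset V × Finset V :=
  ((p.1 \ T) ∪ (p.2 ∩ T), (p.2 \ T) ∪ (p.1 ∩ T))

lemma swapOn_involutive (T : Finset V) : Function.Involutive (swapOn T) := fun p => by
  simp only [swapOn]
  ext u <;> grind

lemma swapOn_union (T : Finset V) (p : Finset V × Finset V) :
    (swapOn T p).1 ∪ (swapOn T p).2 = p.1 ∪ p.2 := by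
  simp only [swapOn]
  grind

lemma swapOn_inter (T : Finset V) (p : Finset V × Finset V) :
    (swapOn T p).1 ∩ (swapOn T p).2 = p.1 ∩ p.2 := by
  simp only [swapOn]
  grind

lemma card_swapOn (T : Finset V) (p : Finset V × Finset V) :
    #(swapOn T p).1 + #(swapOn T p).2 = #p.1 + #p.2 := by
  rw [← card_union_add_card_inter, swapOn_union, swapOn_inter, card_union_add_card_inter]

lemma not_adj_swapOn {G : SimpleGraph V} {A B T : Finset V}
    (hA : G.IsIndepSet A) (hB : G.IsIndepSet B) (hT : G.IsIndepSet T)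
    (hTc : G.IsIndepSet ↑((A ∪ B) \ T)) :
    ∀ u ∈ (swapOn T (A, B)).1, ∀ v ∈ (swapOn T (A, B)).2, ¬ G.Adj u v := by
  intro u hu v hv hadj
  have not_both {S : Finset V} (hS : G.IsIndepSet S) : ¬ (u ∈ S ∧ v ∈ S) :=
    fun h => hS h.1 h.2 hadj.ne hadj
  simp only [swapOn] at hu hv
  grind [not_both hA, not_both hB, not_both hT, not_both hTc]

lemma exists_isIndepSet_sdiff_union (G : SimpleGraph V) :
    ∃ T : Finset V → Finset V, ∀ A B : Finset V, G.IsIndepSet A → G.IsIndepSet B →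
      G.IsIndepSet (T (A ∪ B)) ∧ G.IsIndepSet ↑((A ∪ B) \ T (A ∪ B)) := by
  have exists_part (W : Finset V) : ∃ T : Finset V, ∀ A B : Finset V, G.IsIndepSet A →
      G.IsIndepSet B → A ∪ B = W → G.IsIndepSet T ∧ G.IsIndepSet ↑(W \ T) := by
    by_cases h : ∃ A B : Finset V, G.IsIndepSet A ∧ G.IsIndepSet B ∧ A ∪ B = W
    · obtain ⟨A, B, hA, hB, rfl⟩ := h
      exact ⟨A, fun _ _ _ _ _ => ⟨hA, hB.mono (by grind)⟩⟩
    · exact ⟨∅, fun A B hA hB hW => (h ⟨A, B, hA, hB, hW⟩).elim⟩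
  choose T hT using exists_part
  exact ⟨T, fun A B hA hB => hT _ A B hA hB rfl⟩

end Swap

section Finner

variable {ι V : Type*} {s : Finset ι} {w : ι → ℝ} {x : V → ℝ}

/-- The function obtained from a function `g` of subsets of `N` by summing over whether `v` belongs
to the subset, with weight `x v` if it does. When `v ∉ N` there is nothing to sum over, and `g` is
left unchanged. -/
noncomputable def sumOut (x : V → ℝ) (v : V) (N : Finset V) (g : Finset V → ℝ)
    (S : Finset V) : ℝ :=
  if v ∈ N then g S + x v * g (insert v S) else g S

lemma sumOut_nonneg (hx : ∀ v, 0 ≤ x v) {g : Finset V → ℝ} (hg : ∀ S, 0 ≤ g S) (v : V)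
    (N S : Finset V) : 0 ≤ sumOut x v N g S := by
  unfold sumOut
  split_ifs
  · exact add_nonneg (hg _) (mul_nonneg (hx v) (hg _))
  · exact hg _

lemma sum_powerset_insert_inter (x : V → ℝ) {v : V} {U : Finset V} (hv : v ∉ U) (N : Finset V)
    (g : Finset V → ℝ) :
    ∑ S ∈ (insert v U ∩ N).powerset, (∏ u ∈ S, x u) * g S
      = ∑ S ∈ (U ∩ N).powerset, (∏ u ∈ S, x u) * sumOut x v N g S := by
  have hvUN : v ∉ U ∩ N := fun h => hv (mem_inter.1 h).1
  by_cases hvN : v ∈ N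
  · rw [insert_inter_of_mem hvN, sum_powerset_insert hvUN, ← sum_add_distrib]
    refine sum_congr rfl fun S hS => ?_
    rw [prod_insert (notMem_mono (mem_powerset.1 hS) hvUN), sumOut, if_pos hvN]
    ring
  · simp only [insert_inter_of_notMem hvN, sumOut, if_neg hvN]

lemma prod_rpow_add_mul_prod_rpow_insert_le (hw : ∀ i ∈ s, 0 ≤ w i) (hx : ∀ v, 0 ≤ x v)
    {N : ι → Finset V} {v : V} (hN : ∑ i ∈ s with v ∈ N i, w i = 1)
    {g : ι → Finset V → ℝ} (hg : ∀ i S, 0 ≤ g i S) (A : Finset V) :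
    ∏ i ∈ s, g i (A ∩ N i) ^ w i + x v * ∏ i ∈ s, g i (insert v A ∩ N i) ^ w i
      ≤ ∏ i ∈ s, sumOut x v (N i) (g i) (A ∩ N i) ^ w i := by
  have through_v := prod_rpow_add_mul_prod_rpow_le (fun i hi => hw i (filter_subset _ _ hi)) hN
    (fun i _ => hg i (A ∩ N i)) (fun i _ => hg i (insert v (A ∩ N i))) (hx v)
  have hrest : 0 ≤ ∏ i ∈ s with v ∉ N i, g i (A ∩ N i) ^ w i :=
    prod_nonneg fun i _ => Real.rpow_nonneg (hg _ _) _
  have insert_mem : ∏ i ∈ s with v ∈ N i, g i (insert v A ∩ N i) ^ w i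
      = ∏ i ∈ s with v ∈ N i, g i (insert v (A ∩ N i)) ^ w i :=
    prod_congr rfl fun i hi => by rw [insert_inter_of_mem (mem_filter.1 hi).2]
  have insert_notMem : ∏ i ∈ s with v ∉ N i, g i (insert v A ∩ N i) ^ w i
      = ∏ i ∈ s with v ∉ N i, g i (A ∩ N i) ^ w i :=
    prod_congr rfl fun i hi => by rw [insert_inter_of_notMem (mem_filter.1 hi).2]
  have sumOut_mem : ∏ i ∈ s with v ∈ N i, sumOut x v (N i) (g i) (A ∩ N i) ^ w i
      = ∏ i ∈ s with v ∈ N i, (g i (A ∩ N i) + x v * g i (insert v (A ∩ N i))) ^ w i :=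
    prod_congr rfl fun i hi => by rw [sumOut, if_pos (mem_filter.1 hi).2]
  have sumOut_notMem : ∏ i ∈ s with v ∉ N i, sumOut x v (N i) (g i) (A ∩ N i) ^ w i
      = ∏ i ∈ s with v ∉ N i, g i (A ∩ N i) ^ w i :=
    prod_congr rfl fun i hi => by rw [sumOut, if_neg (mem_filter.1 hi).2]
  simp only [← prod_filter_mul_prod_filter_not s (fun i => v ∈ N i)]
  rw [insert_mem, insert_notMem, sumOut_mem, sumOut_notMem, ← mul_assoc, ← add_mul]
  exact mul_le_mul_of_nonneg_right through_v hrest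

/-- Finner's inequality, by Hölder's inequality one coordinate at a time. -/
theorem sum_powerset_prod_rpow_le (hw : ∀ i ∈ s, 0 ≤ w i) (hx : ∀ v, 0 ≤ x v)
    {N : ι → Finset V} {U : Finset V} (hN : ∀ v ∈ U, ∑ i ∈ s with v ∈ N i, w i = 1)
    {g : ι → Finset V → ℝ} (hg : ∀ i S, 0 ≤ g i S) :
    ∑ A ∈ U.powerset, (∏ v ∈ A, x v) * ∏ i ∈ s, g i (A ∩ N i) ^ w i
      ≤ ∏ i ∈ s, (∑ S ∈ (U ∩ N i).powerset, (∏ v ∈ S, x v) * g i S) ^ w i := by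
  induction U using Finset.induction_on generalizing g with
  | empty => simp
  | insert v U hv ih =>
    have hNv := hN v (mem_insert_self v U)
    calc ∑ A ∈ (insert v U).powerset, (∏ u ∈ A, x u) * ∏ i ∈ s, g i (A ∩ N i) ^ w i
        = ∑ A ∈ U.powerset, (∏ u ∈ A, x u) * (∏ i ∈ s, g i (A ∩ N i) ^ w i
            + x v * ∏ i ∈ s, g i (insert v A ∩ N i) ^ w i) := by
          rw [sum_powerset_insert hv, ← sum_add_distrib]
          refine sum_congr rfl fun A hA => ?_
          rw [prod_insert (notMem_mono (mem_powerset.1 hA) hv)]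
          ring
      _ ≤ ∑ A ∈ U.powerset, (∏ u ∈ A, x u)
            * ∏ i ∈ s, sumOut x v (N i) (g i) (A ∩ N i) ^ w i :=
          sum_le_sum fun A _ => mul_le_mul_of_nonneg_left
            (prod_rpow_add_mul_prod_rpow_insert_le hw hx hNv hg A) (prod_nonneg fun u _ => hx u)
      _ ≤ ∏ i ∈ s, (∑ S ∈ (U ∩ N i).powerset,
            (∏ u ∈ S, x u) * sumOut x v (N i) (g i) S) ^ w i :=
          ih (fun u hu => hN u (mem_insert_of_mem hu))
            fun i => sumOut_nonneg hx (hg i) v (N i)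
      _ = ∏ i ∈ s, (∑ S ∈ (insert v U ∩ N i).powerset, (∏ u ∈ S, x u) * g i S) ^ w i := by
          simp only [sum_powerset_insert_inter x hv]

end Finner

lemma sum_finset_eq_sum_disjSum {α β M : Type*} [Fintype α] [Fintype β] [AddCommMonoid M]
    (f : Finset (α ⊕ β) → M) : ∑ s, f s = ∑ A : Finset α, ∑ B : Finset β, f (A.disjSum B) := by
  rw [← sumEquiv.symm.toEquiv.sum_comp, Fintype.sum_prod_type]
  rfl

lemma sum_powerset_pow_card {α R : Type*} [CommSemiring R] (s : Finset α) (x : R) :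
    ∑ t ∈ s.powerset, x ^ #t = (1 + x) ^ #s := by
  simpa using (prod_one_add (f := fun _ => x) s).symm

lemma sum_powerset_pow_card_mul_ite_empty {α R : Type*} [CommRing R] (s : Finset α) (x c : R) :
    ∑ t ∈ s.powerset, x ^ #t * (if t = ∅ then c else 1) = c + (1 + x) ^ #s - 1 := by
  have split_term (t : Finset α) :
      x ^ #t * (if t = ∅ then c else 1) = x ^ #t + if t = ∅ then c - 1 else 0 := by
    split_ifs with ht <;> simp [ht]
  simp only [split_term, sum_add_distrib, sum_powerset_pow_card, sum_ite_eq',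
    empty_mem_powerset, if_true]
  ring

lemma indepPoly_eq_sum_isIndepSet {V : Type*} [Fintype V] (G : SimpleGraph V) (x : ℝ) :
    indepPoly G x = ∑ s with G.IsIndepSet ↑(s : Finset V), x ^ #s := by
  have isIndepSet_iff (s : Finset V) :
      (∀ u ∈ s, ∀ v ∈ s, ¬ G.Adj u v) ↔ G.IsIndepSet s :=
    ⟨fun h u hu v hv _ => h u hu v hv, fun h u hu v hv hadj => h hu hv hadj.ne hadj⟩
  simp only [indepPoly, isIndepSet_iff, powerset_univ]

lemma indepPoly_pos {V : Type*} [Fintype V] (G : SimpleGraph V) {x : ℝ} (hx : 0 ≤ x) :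
    0 < indepPoly G x :=
  sum_pos' (fun _ _ => pow_nonneg hx _) ⟨∅, by simp⟩

section Bipartite

variable {α β : Type*} {H : SimpleGraph (α ⊕ β)}

lemma isIndepSet_disjSum_iff (hH : H ≤ completeBipartiteGraph α β) {A : Finset α} {B : Finset β} :
    H.IsIndepSet ↑(A.disjSum B) ↔ ∀ a ∈ A, ∀ b ∈ B, ¬ H.Adj (.inl a) (.inr b) := by
  constructor
  · intro h a ha b hb
    exact h (by simpa using ha) (by simpa using hb) (by simp)
  · rintro h (a | b) hu (a' | b') hv _ hadj
    · simpa using hH hadj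
    · exact h a (by simpa using hu) b' (by simpa using hv) hadj
    · exact h a' (by simpa using hv) b (by simpa using hu) hadj.symm
    · simpa using hH hadj

lemma degree_inl_of_le_completeBipartiteGraph [Fintype β]
    (hH : H ≤ completeBipartiteGraph α β) (a : α) [Fintype (H.neighborSet (.inl a))] :
    H.degree (.inl a) = #{b | H.Adj (.inl a) (.inr b)} := by
  rw [← H.card_neighborFinset_eq_degree, ← card_map (Function.Embedding.inr : β ↪ α ⊕ β)]
  congr 1
  ext (a' | b)
  · simpa using fun hadj => by simpa using hH hadj
  · simp

lemma degree_inr_of_le_completeBipartiteGraph [Fintype α]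
    (hH : H ≤ completeBipartiteGraph α β) (b : β) [Fintype (H.neighborSet (.inr b))] :
    H.degree (.inr b) = #{a | H.Adj (.inl a) (.inr b)} := by
  rw [← H.card_neighborFinset_eq_degree, ← card_map (Function.Embedding.inl : α ↪ α ⊕ β)]
  congr 1
  ext (a | b')
  · simp [H.adj_comm]
  · simpa using fun hadj => by simpa using hH hadj

variable [Fintype α] [Fintype β]

lemma indepPoly_eq_sum_of_le_completeBipartiteGraph (hH : H ≤ completeBipartiteGraph α β) (x : ℝ) :
    indepPoly H x
      = ∑ A : Finset α, x ^ #A * (1 + x) ^ #{b | ∀ a ∈ A, ¬ H.Adj (.inl a) (.inr b)} := by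
  rw [indepPoly_eq_sum_isIndepSet, sum_filter, sum_finset_eq_sum_disjSum]
  refine sum_congr rfl fun A _ => ?_
  have indep_iff (B : Finset β) :
      H.IsIndepSet ↑(A.disjSum B) ↔
        B ∈ powerset {b | ∀ a ∈ A, ¬ H.Adj (.inl a) (.inr b)} := by
    rw [isIndepSet_disjSum_iff hH]
    grind
  simp only [indep_iff, card_disjSum]
  rw [← sum_filter, filter_univ_mem, ← sum_powerset_pow_card, mul_sum]
  exact sum_congr rfl fun B _ => pow_add _ _ _

theorem indepPoly_le_prod_of_le_completeBipartiteGraph [H.LocallyFinite]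
    (hH : H ≤ completeBipartiteGraph α β)
    {d : ℕ} (hd : d ≠ 0) (hdeg : ∀ a, H.degree (.inl a) = d) {x : ℝ} (hx : 0 ≤ x) :
    indepPoly H x ≤
      ∏ b : β, ((1 + x) ^ d + (1 + x) ^ H.degree (.inr b) - 1) ^ (1 / d : ℝ) := by
  let N (b : β) : Finset α := {a | H.Adj (.inl a) (.inr b)}
  let g (S : Finset α) : ℝ := if S = ∅ then (1 + x) ^ d else 1
  have hg (S : Finset α) : 0 ≤ g S := by
    simp only [g]
    split_ifs <;> positivity
  have uniform_cover (a : α) : ∑ b with a ∈ N b, (1 / d : ℝ) = 1 := by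
    have card_cover : #{b | a ∈ N b} = d := by
      simpa [N, degree_inl_of_le_completeBipartiteGraph hH] using hdeg a
    rw [sum_const, card_cover, nsmul_eq_mul, mul_one_div_cancel (Nat.cast_ne_zero.2 hd)]
  have rpow_g (A : Finset α) (b : β) :
      g (A ∩ N b) ^ (1 / d : ℝ) = if ∀ a ∈ A, ¬ H.Adj (.inl a) (.inr b) then 1 + x else 1 := by
    have inter_empty : A ∩ N b = ∅ ↔ ∀ a ∈ A, ¬ H.Adj (.inl a) (.inr b) := by
      simp [N, Finset.ext_iff]
    simp only [g, inter_empty]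
    split_ifs
    · rw [one_div, Real.pow_rpow_inv_natCast (by positivity) hd]
    · exact Real.one_rpow _
  calc indepPoly H x
      = ∑ A : Finset α, x ^ #A * ∏ b, g (A ∩ N b) ^ (1 / d : ℝ) := by
        rw [indepPoly_eq_sum_of_le_completeBipartiteGraph hH]
        simp only [rpow_g, ← prod_filter, prod_const]
    _ ≤ ∏ b, (∑ S ∈ (N b).powerset, x ^ #S * g S) ^ (1 / d : ℝ) := by
        simpa using sum_powerset_prod_rpow_le (s := univ) (U := univ) (x := fun _ => x) (N := N)
          (w := fun _ => (1 / d : ℝ)) (g := fun _ => g) (fun _ _ => by positivity) (fun _ => hx)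
          (fun a _ => uniform_cover a) (fun _ => hg)
    _ = ∏ b, ((1 + x) ^ d + (1 + x) ^ H.degree (.inr b) - 1) ^ (1 / d : ℝ) := by
        simp only [g, sum_powerset_pow_card_mul_ite_empty, N,
          degree_inr_of_le_completeBipartiteGraph hH]

end Bipartite

section DoubleCover

variable {V : Type*}

lemma degree_bipartiteDoubleCover_inl (G : SimpleGraph V) (v : V) [Fintype (G.neighborSet v)]
    [Fintype (G.bipartiteDoubleCover.neighborSet (.inl v))] :
    G.bipartiteDoubleCover.degree (.inl v) = G.degree v := by
  simp only [← SimpleGraph.card_neighborFinset_eq_degree]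
  rw [← card_map (Function.Embedding.inr : V ↪ V ⊕ V)]
  congr 1
  ext (_ | _) <;> simp only [mem_map, SimpleGraph.mem_neighborFinset] <;> simp

lemma degree_bipartiteDoubleCover_inr (G : SimpleGraph V) (v : V) [Fintype (G.neighborSet v)]
    [Fintype (G.bipartiteDoubleCover.neighborSet (.inr v))] :
    G.bipartiteDoubleCover.degree (.inr v) = G.degree v := by
  simp only [← SimpleGraph.card_neighborFinset_eq_degree]
  rw [← card_map (Function.Embedding.inl : V ↪ V ⊕ V)]
  congr 1
  ext (_ | _) <;> simp only [mem_map, SimpleGraph.mem_neighborFinset] <;> simp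

variable [Fintype V]

theorem indepPoly_sq_le_indepPoly_bipartiteDoubleCover (G : SimpleGraph V) {x : ℝ}
    (hx : 0 ≤ x) :
    indepPoly G x ^ 2 ≤ indepPoly G.bipartiteDoubleCover x := by
  obtain ⟨T, hT⟩ := exists_isIndepSet_sdiff_union G
  let I : Finset (Finset V) := {s | G.IsIndepSet s}
  let Φ (p : Finset V × Finset V) : Finset (V ⊕ V) :=
    (swapOn (T (p.1 ∪ p.2)) p).1.disjSum (swapOn (T (p.1 ∪ p.2)) p).2
  have hΦ_inj : Function.Injective Φ := fun p q hpq => by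
    have hswap : swapOn (T (p.1 ∪ p.2)) p = swapOn (T (q.1 ∪ q.2)) q :=
      Prod.ext_iff.2 (disjSum_inj.1 hpq)
    have hunion : p.1 ∪ p.2 = q.1 ∪ q.2 := by
      rw [← swapOn_union (T (p.1 ∪ p.2)) p, hswap, swapOn_union]
    rw [hunion] at hswap
    exact (swapOn_involutive _).injective hswap
  have hΦ_indep : ∀ p ∈ I ×ˢ I, G.bipartiteDoubleCover.IsIndepSet ↑(Φ p) := by
    simp only [I, mem_product, mem_filter_univ, Prod.forall]
    rintro A B ⟨hA, hB⟩
    obtain ⟨hTAB, hTcAB⟩ := hT A B hA hB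
    exact (isIndepSet_disjSum_iff G.bipartiteDoubleCover_le).2 (not_adj_swapOn hA hB hTAB hTcAB)
  calc indepPoly G x ^ 2
      = ∑ p ∈ I ×ˢ I, x ^ (#p.1 + #p.2) := by
        simp only [indepPoly_eq_sum_isIndepSet, sq, sum_mul_sum, sum_product, pow_add, I]
    _ = ∑ s ∈ (I ×ˢ I).image Φ, x ^ #s := by
        rw [sum_image hΦ_inj.injOn]
        simp only [Φ, card_disjSum, card_swapOn]
    _ ≤ indepPoly G.bipartiteDoubleCover x := by
        rw [indepPoly_eq_sum_isIndepSet]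
        refine sum_le_sum_of_subset_of_nonneg ?_ fun _ _ _ => pow_nonneg hx _
        exact image_subset_iff.2 fun p hp => by simpa only [mem_filter_univ] using hΦ_indep p hp

theorem indepPoly_sq_le_of_isRegularOfDegree {G : SimpleGraph V} [G.LocallyFinite] {d : ℕ}
    (hd : d ≠ 0) (hG : G.IsRegularOfDegree d) {x : ℝ} (hx : 0 ≤ x) :
    indepPoly G x ^ 2 ≤ ((2 * (1 + x) ^ d - 1) ^ (1 / d : ℝ)) ^ Fintype.card V :=
  calc indepPoly G x ^ 2
      ≤ indepPoly G.bipartiteDoubleCover x := indepPoly_sq_le_indepPoly_bipartiteDoubleCover G hx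
    _ ≤ ∏ v : V, ((1 + x) ^ d + (1 + x) ^ G.degree v - 1) ^ (1 / d : ℝ) := by
        simpa only [degree_bipartiteDoubleCover_inr] using
          indepPoly_le_prod_of_le_completeBipartiteGraph G.bipartiteDoubleCover_le hd
            (fun v => (degree_bipartiteDoubleCover_inl G v).trans (hG v)) hx
    _ = ((2 * (1 + x) ^ d - 1) ^ (1 / d : ℝ)) ^ Fintype.card V := by
        simp only [hG.degree_eq, ← two_mul, prod_const, card_univ]

end DoubleCover

/-- For every $d$-regular graph $G$ on $n$ vertices and $\lambda>0$,
$(1/n)\log P_G(\lambda) \le (1/(2d))\log(2(1+\lambda)^d-1)$, the latter being the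
normalized log independence polynomial of $K_{d,d}$. -/
theorem normalized_log_indepPoly_le {V : Type*} [Fintype V] (G : SimpleGraph V) (d : ℕ)
    (hd : 1 ≤ d) (hreg : G.IsRegularOfDegree d) (x : ℝ) (hx : 0 < x) :
    (1 / (Fintype.card V : ℝ)) * Real.log (indepPoly G x)
      ≤ (1 / (2 * d : ℝ)) * Real.log (2 * (1 + x) ^ d - 1) := by
  have hK : 1 ≤ 2 * (1 + x) ^ d - 1 := by
    linarith [one_le_pow₀ (n := d) (show 1 ≤ 1 + x by linarith)]
  have two_mul_log_le : 2 * Real.log (indepPoly G x)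
      ≤ Fintype.card V * (1 / d * Real.log (2 * (1 + x) ^ d - 1)) := by
    have log_sq_le := Real.log_le_log (pow_pos (indepPoly_pos G hx.le) 2)
      (indepPoly_sq_le_of_isRegularOfDegree (Nat.one_le_iff_ne_zero.1 hd) hreg hx.le)
    rwa [Real.log_pow, Real.log_pow, Real.log_rpow (by linarith), Nat.cast_ofNat] at log_sq_le
  rw [one_div_mul_eq_div]
  refine div_le_of_le_mul₀ (by positivity) (mul_nonneg (by positivity) (Real.log_nonneg hK)) ?_
  calc Real.log (indepPoly G x)
      ≤ Fintype.card V * (1 / d * Real.log (2 * (1 + x) ^ d - 1)) / 2 := by linarith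
    _ = 1 / (2 * d) * Real.log (2 * (1 + x) ^ d - 1) * Fintype.card V := by ring
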